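/- arXiv:1803.08140 — 2 statements merged into one kernel-verified Lean document; each statement's English description precedes it below -/
import Mathlib

section
/- Fix an integer r ≥ 2. Then E_r(n) · (log n)^{(r−1)/2} → c_r as n → ∞, where c_r = 1 / ((2π)^{(r−1)/2} · √r); that is, E_r(n) ∼ c_r / (log n)^{(r−1)/2}. -/
/-- ω_n(σ): the number of disjoint cycles of a permutation of `n` letters,
including fixed points. -/
def numCycles {n : ℕ} (σ : Equiv.Perm (Fin n)) : ℕ :=
  σ.cycleType.card + (n - σ.cycleType.sum)

/-- E_r(n): the probability that `r` independent uniformly random permutations of `n`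
letters all have the same number of cycles. -/
noncomputable def Er (r n : ℕ) : ℝ :=
  (Nat.card {v : Fin r → Equiv.Perm (Fin n) //
      ∀ i j, numCycles (v i) = numCycles (v j)} : ℝ) / (n.factorial : ℝ) ^ r


open Equiv Equiv.Perm in
lemma cyc_swap_mul {α : Type*} [Fintype α] [DecidableEq α] (σ : Perm α) (a p : α)
    (hap : a ≠ p) (ha : σ a = a) :
    (swap a p * σ).cycleType.card + σ.cycleType.sum + 1
      = σ.cycleType.card + (swap a p * σ).cycleType.sum := by
  by_cases hp : σ p = p
  · have hd : Disjoint (swap a p) σ := by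
      intro x
      by_cases h1 : x = a
      · right; rw [h1, ha]
      by_cases h2 : x = p
      · right; rw [h2, hp]
      left; exact swap_apply_of_ne_of_ne h1 h2
    rw [hd.cycleType_mul, (isCycle_swap hap).cycleType,
      card_support_swap hap]
    simp
    omega
  · set c := σ.cycleOf p with hc
    have hcm : c ∈ σ.cycleFactorsFinset := by
      rw [hc, cycleOf_mem_cycleFactorsFinset_iff]; simpa using hp
    have hd := disjoint_mul_inv_of_mem_cycleFactorsFinset hcm
    set τ := σ * c⁻¹ with hτ
    have hσ : σ = c * τ := by
      rw [← hd.commute.eq]; simp [hτ]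
    have hl : c = (σ.toList p).formPerm := (formPerm_toList σ p).symm
    have hlen : 2 ≤ (σ.toList p).length := by
      rw [two_le_length_toList_iff_mem_support]; simpa using hp
    have hnd := nodup_toList σ p
    have hhead : (σ.toList p)[0]'(by omega) = p := toList_getElem_zero _ _ (by simpa using hp)
    obtain ⟨l, hl2⟩ : ∃ l, σ.toList p = p :: l := by
      cases h : σ.toList p with
      | nil => simp [h] at hlen
      | cons x l => simp [h] at hhead; exact ⟨l, by rw [hhead]⟩
    have hanot : a ∉ σ.toList p := by
      rw [mem_toList_iff]
      rintro ⟨h, -⟩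
      have : (σ p = p) := (h.apply_eq_self_iff).mpr ha
      exact hp this
    have hnd' : (a :: p :: l).Nodup := by
      rw [← hl2]; exact List.nodup_cons.mpr ⟨hanot, hnd⟩
    have hsc : swap a p * c = (a :: p :: l).formPerm := by
      rw [hl, hl2, List.formPerm_cons_cons]
    have ct1 : c.cycleType = {l.length + 1} := by
      rw [hl, (List.isCycle_formPerm hnd hlen).cycleType, List.support_formPerm_of_nodup _ hnd
        (fun x h => by rw [h] at hlen; simp at hlen), List.toFinset_card_of_nodup hnd, hl2]; simp
    have ct2 : (swap a p * c).cycleType = {l.length + 2} := by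
      rw [hsc, (List.isCycle_formPerm hnd' (by simp)).cycleType,
        List.support_formPerm_of_nodup _ hnd' (by simp), List.toFinset_card_of_nodup hnd']; simp
    have hτa : τ a = a := by
      have hca : c a = a := by
        rw [hl]; exact List.formPerm_apply_of_notMem hanot
      have : c⁻¹ a = a := by rw [Perm.inv_eq_iff_eq]; exact hca.symm
      rw [hτ, mul_apply, this, ha]
    have hcp : c p ≠ p := by rw [hc, cycleOf_apply_self]; exact hp
    have hτp : τ p = p := (hd p).resolve_right hcp
    have hd2 : Disjoint (swap a p * c) τ := by
      intro x
      rcases hd x with h | h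
      · right; exact h
      by_cases h1 : x = a
      · right; rw [h1, hτa]
      by_cases h2 : x = p
      · right; rw [h2, hτp]
      left; rw [mul_apply, h]; exact swap_apply_of_ne_of_ne h1 h2
    have e1 : (swap a p * σ).cycleType = {l.length + 2} + τ.cycleType := by
      rw [hσ, ← mul_assoc, hd2.cycleType_mul, ct2]
    have e2 : σ.cycleType = {l.length + 1} + τ.cycleType := by
      conv_lhs => rw [hσ]
      rw [hd.symm.cycleType_mul, ct1]
    rw [e1, e2]
    simp
    omega

open Equiv Equiv.Perm in
lemma decomp_cycleType {n : ℕ} (e : Perm (Fin n)) :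
    (decomposeFin.symm ((0 : Fin (n+1)), e)).cycleType = e.cycleType := by
  have : decomposeFin.symm ((0 : Fin (n+1)), e)
      = e.extendDomain (finSuccAboveEquiv (0 : Fin (n+1))) := by
    ext x
    refine Fin.cases ?_ (fun i => ?_) x
    · rw [extendDomain_apply_not_subtype _ _ (by simp)]; simp
    · have := extendDomain_apply_image e (finSuccAboveEquiv (0 : Fin (n+1))) i
      simp only [finSuccAboveEquiv_apply, Fin.zero_succAbove] at this
      rw [decomposeFin_symm_apply_succ, this]
      simp
  rw [this, cycleType_extendDomain]

open Equiv Equiv.Perm in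
lemma decomp_eq {n : ℕ} (p : Fin (n+1)) (e : Perm (Fin n)) :
    decomposeFin.symm (p, e) = swap 0 p * decomposeFin.symm ((0 : Fin (n+1)), e) := by
  ext x
  refine Fin.cases ?_ (fun i => ?_) x <;> simp

open Equiv Equiv.Perm in
lemma numCycles_zero {n : ℕ} (e : Perm (Fin n)) :
    numCycles (decomposeFin.symm ((0 : Fin (n+1)), e)) = numCycles e + 1 := by
  unfold numCycles
  rw [decomp_cycleType]
  have := sum_cycleType_le e
  simp at this
  omega

open Equiv Equiv.Perm in
lemma numCycles_succ {n : ℕ} (p : Fin n) (e : Perm (Fin n)) :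
    numCycles (decomposeFin.symm (p.succ, e)) = numCycles e := by
  unfold numCycles
  have h := cyc_swap_mul (decomposeFin.symm ((0 : Fin (n+1)), e)) 0 p.succ
    (Fin.succ_ne_zero p).symm (by simp)
  rw [← decomp_eq, decomp_cycleType] at h
  have h1 := sum_cycleType_le e
  have h2 := sum_cycleType_le (decomposeFin.symm (p.succ, e))
  rw [Fintype.card_fin] at h1 h2
  omega

lemma gen_fun (n : ℕ) (z : ℂ) :
    ∑ σ : Equiv.Perm (Fin n), z ^ numCycles σ = ∏ j ∈ Finset.range n, (z + j) := by
  induction n with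
  | zero => simp [numCycles]
  | succ n ih =>
    rw [← Equiv.sum_comp Equiv.Perm.decomposeFin.symm, Fintype.sum_prod_type, Fin.sum_univ_succ]
    simp only [numCycles_zero, numCycles_succ, pow_succ, ← Finset.sum_mul, ih]
    rw [Finset.prod_range_succ]
    simp
    ring

/-- probability of having k cycles -/
noncomputable def pcyc (n k : ℕ) : ℝ :=
  ((Finset.univ.filter (fun σ : Equiv.Perm (Fin n) => numCycles σ = k)).card : ℝ) / n.factorial

lemma pcyc_nonneg (n k : ℕ) : 0 ≤ pcyc n k := by unfold pcyc; positivity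

lemma numCycles_le {n : ℕ} (σ : Equiv.Perm (Fin n)) : numCycles σ ≤ n := by
  unfold numCycles
  have h1 := Equiv.Perm.sum_cycleType_le σ
  have h2 : σ.cycleType.card ≤ σ.cycleType.sum := by
    have := Multiset.card_nsmul_le_sum (s := σ.cycleType) (a := 1)
      (fun x hx => (Equiv.Perm.one_lt_of_mem_cycleType hx).le)
    simpa using this
  rw [Fintype.card_fin] at h1
  omega

lemma pcyc_gen (n : ℕ) (z : ℂ) :
    ∑ k ∈ Finset.range (n+1), (pcyc n k : ℂ) * z ^ k
      = ∏ j ∈ Finset.range n, (1 + (z - 1) / ((j : ℂ) + 1)) := by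
  have h : ∑ k ∈ Finset.range (n+1), (pcyc n k : ℂ) * z ^ k
      = (∑ σ : Equiv.Perm (Fin n), z ^ numCycles σ) / n.factorial := by
    rw [← Finset.sum_fiberwise_of_maps_to (s := Finset.univ) (t := Finset.range (n+1))
      (g := fun σ : Equiv.Perm (Fin n) => numCycles σ)
      (fun σ _ => Finset.mem_range.mpr (Nat.lt_succ_of_le (numCycles_le σ))), Finset.sum_div]
    refine Finset.sum_congr rfl fun k _ => ?_
    rw [Finset.sum_congr rfl (g := fun _ => z ^ k)
      (fun σ hσ => by rw [(Finset.mem_filter.mp hσ).2])]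
    simp [pcyc]
    ring
  rw [h, gen_fun, ← Finset.prod_range_add_one_eq_factorial]
  push_cast
  rw [← Finset.prod_div_distrib]
  refine Finset.prod_congr rfl fun j _ => ?_
  have : (j : ℂ) + 1 ≠ 0 := Nat.cast_add_one_ne_zero j
  field_simp
  ring

lemma Er_eq (r n : ℕ) (hr : 1 ≤ r) :
    Er r n = ∑ k ∈ Finset.range (n+1), pcyc n k ^ r := by
  unfold Er pcyc
  simp_rw [div_pow, ← Finset.sum_div]
  congr 1
  classical
  rw [Nat.card_eq_fintype_card, Fintype.card_subtype]
  rw [Finset.card_eq_sum_card_fiberwise (t := Finset.range (n+1))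
    (f := fun v : Fin r → Equiv.Perm (Fin n) => numCycles (v ⟨0, hr⟩))
    (fun v _ => by simpa using (Nat.lt_succ_of_le (numCycles_le _)))]
  push_cast
  refine Finset.sum_congr rfl fun k _ => ?_
  norm_cast
  rw [Finset.filter_filter]
  have : (Finset.univ.filter (fun v : Fin r → Equiv.Perm (Fin n) =>
      (∀ i j, numCycles (v i) = numCycles (v j)) ∧ numCycles (v ⟨0, hr⟩) = k))
      = Fintype.piFinset (fun _ : Fin r =>
        Finset.univ.filter (fun σ : Equiv.Perm (Fin n) => numCycles σ = k)) := by
    ext v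
    simp only [Finset.mem_filter, Finset.mem_univ, true_and, Fintype.mem_piFinset]
    constructor
    · rintro ⟨h1, h2⟩ i
      rw [← h2]; exact h1 _ _
    · intro h
      exact ⟨fun i j => by rw [h, h], h _⟩
  rw [this, Fintype.card_piFinset]
  simp

/-- characteristic function of the number of cycles -/
noncomputable def cPhi (n : ℕ) (t : ℝ) : ℂ :=
  ∏ j ∈ Finset.range n, (1 + (Complex.exp (t * Complex.I) - 1) / ((j : ℂ) + 1))

/-- normalized characteristic function -/
noncomputable def cPsi (n : ℕ) (s : ℝ) : ℂ :=
  cPhi n (s / √(Real.log n)) * Complex.exp (-(s * √(Real.log n) : ℝ) * Complex.I)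

lemma cPhi_eq (n : ℕ) (t : ℝ) :
    cPhi n t = ∑ k ∈ Finset.range (n+1), (pcyc n k : ℂ) * Complex.exp (k * t * Complex.I) := by
  unfold cPhi
  rw [← pcyc_gen]
  refine Finset.sum_congr rfl fun k _ => ?_
  rw [← Complex.exp_nat_mul]; ring_nf

lemma cPhi_cont (n : ℕ) : Continuous (cPhi n) := by
  unfold cPhi; fun_prop

lemma cPsi_cont (n : ℕ) : Continuous (cPsi n) := by
  unfold cPsi
  have := cPhi_cont n
  fun_prop

lemma pcyc_sum (n : ℕ) : ∑ k ∈ Finset.range (n+1), pcyc n k = 1 := by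
  have := pcyc_gen n 1
  simp at this
  exact_mod_cast this

lemma factor_norm_sq (t : ℝ) (a : ℝ) :
    ‖1 + (Complex.exp (t * Complex.I) - 1) * (a : ℂ)‖ ^ 2
      = 1 - 2 * (1 - Real.cos t) * (a - a ^ 2) := by
  rw [← Complex.normSq_eq_norm_sq, Complex.normSq_apply]
  simp [Complex.exp_ofReal_mul_I_re, Complex.exp_ofReal_mul_I_im]
  have := Real.sin_sq_add_cos_sq t
  linear_combination a ^ 2 * this

lemma factor_norm_le (t : ℝ) (a : ℝ) :
    ‖1 + (Complex.exp (t * Complex.I) - 1) * (a : ℂ)‖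
      ≤ Real.exp (-((1 - Real.cos t) * (a - a ^ 2))) := by
  refine (pow_le_pow_iff_left₀ (norm_nonneg _) (Real.exp_pos _).le two_ne_zero).mp ?_
  rw [factor_norm_sq, ← Real.exp_nat_mul]
  have := Real.add_one_le_exp ((2 : ℕ) * -((1 - Real.cos t) * (a - a ^ 2)))
  push_cast at this ⊢
  linarith

lemma cPhi_factor (t : ℝ) (j : ℕ) :
    (1 + (Complex.exp (t * Complex.I) - 1) / ((j : ℂ) + 1))
      = 1 + (Complex.exp (t * Complex.I) - 1) * (((j : ℝ) + 1)⁻¹ : ℝ) := by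
  push_cast; rw [div_eq_mul_inv]

lemma inv_sub_sq_nonneg (j : ℕ) : 0 ≤ ((j : ℝ) + 1)⁻¹ - (((j : ℝ) + 1)⁻¹) ^ 2 := by
  have h1 : ((j : ℝ) + 1)⁻¹ ≤ 1 := inv_le_one_of_one_le₀ (by linarith [Nat.cast_nonneg (α := ℝ) j])
  have h2 : 0 ≤ ((j : ℝ) + 1)⁻¹ := by positivity
  nlinarith

lemma factor_norm_le_one (t : ℝ) (j : ℕ) :
    ‖(1 + (Complex.exp (t * Complex.I) - 1) / ((j : ℂ) + 1))‖ ≤ 1 := by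
  rw [cPhi_factor]
  refine (factor_norm_le _ _).trans ?_
  rw [Real.exp_le_one_iff]
  have := inv_sub_sq_nonneg j
  have h3 : 0 ≤ 1 - Real.cos t := by linarith [Real.cos_le_one t]
  have := mul_nonneg h3 this
  linarith

lemma cPhi_le_one (n : ℕ) (t : ℝ) : ‖cPhi n t‖ ≤ 1 := by
  unfold cPhi
  rw [norm_prod]
  exact Finset.prod_le_one (fun _ _ => norm_nonneg _) (fun j _ => factor_norm_le_one t j)

lemma cPsi_norm (n : ℕ) (s : ℝ) : ‖cPsi n s‖ = ‖cPhi n (s / √(Real.log n))‖ := by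
  unfold cPsi
  rw [norm_mul]
  have : ‖Complex.exp (-(s * √(Real.log n) : ℝ) * Complex.I)‖ = 1 := by
    have := Complex.norm_exp_ofReal_mul_I (-(s * √(Real.log n)))
    push_cast at this ⊢; exact this
  rw [this, mul_one]

lemma cPsi_le_one (n : ℕ) (s : ℝ) : ‖cPsi n s‖ ≤ 1 := by
  rw [cPsi_norm]; exact cPhi_le_one _ _

lemma sum_inv_sq_le (n : ℕ) : ∑ j ∈ Finset.range n, (((j : ℝ) + 1)⁻¹) ^ 2 ≤ 2 := by
  have : ∀ n : ℕ, ∑ j ∈ Finset.range (n+1), (((j : ℝ) + 1)⁻¹) ^ 2 ≤ 2 - ((n : ℝ) + 1)⁻¹ := by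
    intro n
    induction n with
    | zero => norm_num
    | succ n ih =>
      rw [Finset.sum_range_succ]
      have h : (((n + 1 : ℕ) : ℝ) + 1)⁻¹ ^ 2 ≤ ((n : ℝ) + 1)⁻¹ - (((n + 1 : ℕ) : ℝ) + 1)⁻¹ := by
        push_cast
        rw [inv_sub_inv (by positivity) (by positivity), inv_pow, inv_eq_one_div,
          div_le_div_iff₀ (by positivity) (by positivity)]
        nlinarith [Nat.cast_nonneg (α := ℝ) n]
      linarith
  cases n with
  | zero => simp
  | succ n => 
    have h := this n
    have : 0 ≤ ((n : ℝ) + 1)⁻¹ := by positivity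
    linarith

lemma harm_eq (n : ℕ) : ∑ j ∈ Finset.range n, ((j : ℝ) + 1)⁻¹ = (harmonic n : ℝ) := by
  simp [harmonic]

lemma cPhi_bound (n : ℕ) (t : ℝ) (hn : 2 ≤ Real.log n) (ht : |t| ≤ Real.pi) :
    ‖cPhi n t‖ ≤ Real.exp (-(2 / Real.pi ^ 2 * t ^ 2 * (Real.log n - 2))) := by
  have h1 : ‖cPhi n t‖ ≤ Real.exp (-((1 - Real.cos t) *
      (∑ j ∈ Finset.range n, (((j : ℝ) + 1)⁻¹ - (((j : ℝ) + 1)⁻¹) ^ 2)))) := by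
    unfold cPhi
    rw [norm_prod, Finset.mul_sum, ← Finset.sum_neg_distrib, Real.exp_sum]
    refine Finset.prod_le_prod (fun _ _ => norm_nonneg _) (fun j _ => ?_)
    rw [cPhi_factor]; exact factor_norm_le _ _
  refine h1.trans ?_
  rw [Real.exp_le_exp, neg_le_neg_iff, Finset.sum_sub_distrib, harm_eq]
  have h2 := sum_inv_sq_le n
  have h3 : Real.log n ≤ harmonic n := by
    refine le_trans ?_ (log_add_one_le_harmonic n)
    have : 0 < n := by
      rcases Nat.eq_zero_or_pos n with h | h
      · subst h; norm_num at hn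
      · exact h
    apply Real.log_le_log (by exact_mod_cast this)
    push_cast; linarith
  have h4 := Real.cos_le_one_sub_mul_cos_sq ht
  apply mul_le_mul (by linarith) (by linarith) (by linarith)
  linarith [Real.cos_le_one t]

lemma cPsi_bound (n : ℕ) (s : ℝ) (hn : 2 ≤ Real.log n) (hs : |s| ≤ Real.pi * √(Real.log n)) :
    ‖cPsi n s‖ ≤ Real.exp 4 * Real.exp (-(2 / Real.pi ^ 2) * s ^ 2) := by
  have hL : 0 < √(Real.log n) := Real.sqrt_pos.mpr (by linarith)
  have ht : |s / √(Real.log n)| ≤ Real.pi := by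
    rw [abs_div, abs_of_pos hL, div_le_iff₀ hL]; exact hs
  rw [cPsi_norm]
  refine (cPhi_bound n _ hn ht).trans ?_
  rw [← Real.exp_add, Real.exp_le_exp]
  have hts : s ^ 2 = (s / √(Real.log n)) ^ 2 * Real.log n := by
    rw [div_pow, Real.sq_sqrt (by linarith)]; field_simp
  have ht2 : (s / √(Real.log n)) ^ 2 ≤ Real.pi ^ 2 := by
    rw [sq_le_sq, abs_of_pos Real.pi_pos]; exact ht
  have : 2 / Real.pi ^ 2 * (s / √(Real.log n)) ^ 2 ≤ 2 := by
    rw [div_mul_eq_mul_div, div_le_iff₀ (by positivity)]; linarith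
  rw [hts]
  nlinarith

lemma prod_sub_prod (n : ℕ) (a b : ℕ → ℂ) (ha : ∀ j, ‖a j‖ ≤ 1) (hb : ∀ j, ‖b j‖ ≤ 1) :
    ‖∏ j ∈ Finset.range n, a j - ∏ j ∈ Finset.range n, b j‖
      ≤ ∑ j ∈ Finset.range n, ‖a j - b j‖ := by
  induction n with
  | zero => simp
  | succ n ih =>
    rw [Finset.prod_range_succ, Finset.prod_range_succ, Finset.sum_range_succ]
    set A := ∏ j ∈ Finset.range n, a j
    set B := ∏ j ∈ Finset.range n, b j
    have hB : ‖B‖ ≤ 1 := by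
      rw [norm_prod]; exact Finset.prod_le_one (fun _ _ => norm_nonneg _) (fun j _ => hb j)
    have : A * a n - B * b n = (A - B) * a n + B * (a n - b n) := by ring
    rw [this]
    refine (norm_add_le _ _).trans ?_
    rw [norm_mul, norm_mul]
    have h1 := mul_le_of_le_one_right (norm_nonneg (A - B)) (ha n)
    have h2 := mul_le_of_le_one_left (norm_nonneg (a n - b n)) hB
    linarith

lemma cPhi_approx (n : ℕ) (t : ℝ) (ht : ‖Complex.exp (t * Complex.I) - 1‖ ≤ 1) :
    ‖cPhi n t - Complex.exp ((Complex.exp (t * Complex.I) - 1) * (harmonic n : ℝ))‖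
      ≤ 2 * ‖Complex.exp (t * Complex.I) - 1‖ ^ 2 := by
  set w := Complex.exp (t * Complex.I) - 1 with hw
  have hre : w.re ≤ 0 := by
    simp [hw, Complex.exp_ofReal_mul_I_re, Real.cos_le_one]
  have h1 : Complex.exp (w * (harmonic n : ℝ))
      = ∏ j ∈ Finset.range n, Complex.exp (w * (((j : ℝ) + 1)⁻¹ : ℝ)) := by
    rw [← Complex.exp_sum, ← Finset.mul_sum, ← harm_eq]; push_cast; rfl
  rw [h1]
  unfold cPhi
  refine (prod_sub_prod n _ _ (fun j => factor_norm_le_one t j) (fun j => ?_)).trans ?_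
  · rw [Complex.norm_exp, Real.exp_le_one_iff, Complex.re_mul_ofReal]
    exact mul_nonpos_of_nonpos_of_nonneg hre (by positivity)
  · calc _ ≤ ∑ j ∈ Finset.range n, ‖w‖ ^ 2 * (((j : ℝ) + 1)⁻¹) ^ 2 := by
          refine Finset.sum_le_sum fun j _ => ?_
          rw [cPhi_factor, ← hw]
          have hn : ‖w * (((j : ℝ) + 1)⁻¹ : ℝ)‖ = ‖w‖ * ((j : ℝ) + 1)⁻¹ := by
            rw [norm_mul, Complex.norm_real, Real.norm_of_nonneg (by positivity)]
          have hinv : ((j : ℝ) + 1)⁻¹ ≤ 1 :=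
            inv_le_one_of_one_le₀ (by linarith [Nat.cast_nonneg (α := ℝ) j])
          have hle : ‖w * (((j : ℝ) + 1)⁻¹ : ℝ)‖ ≤ 1 := by
            rw [hn]; exact mul_le_one₀ ht (by positivity) hinv
          have := Complex.norm_exp_sub_one_sub_id_le hle
          rw [hn, mul_pow] at this
          refine le_trans (le_of_eq ?_) this
          rw [← norm_neg]; congr 1; ring
      _ = ‖w‖ ^ 2 * ∑ j ∈ Finset.range n, (((j : ℝ) + 1)⁻¹) ^ 2 := by rw [Finset.mul_sum]
      _ ≤ ‖w‖ ^ 2 * 2 := by gcongr; exact sum_inv_sq_le n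
      _ = _ := by ring

open Filter Topology in
lemma tendsto_sqrt_log : Tendsto (fun n : ℕ => √(Real.log n)) atTop atTop :=
  Real.tendsto_sqrt_atTop.comp (Real.tendsto_log_atTop.comp tendsto_natCast_atTop_atTop)

open Filter Topology in
lemma cPsi_tendsto (s : ℝ) :
    Tendsto (fun n : ℕ => cPsi n s) atTop (𝓝 (Complex.exp (-(s : ℂ) ^ 2 / 2))) := by
  have hT := tendsto_sqrt_log
  have ht : Tendsto (fun n : ℕ => s / √(Real.log n)) atTop (𝓝 0) :=
    Tendsto.div_atTop tendsto_const_nhds hT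
  set w : ℕ → ℂ := fun n => Complex.exp ((s / √(Real.log n) : ℝ) * Complex.I) - 1 with hw
  have hw0 : Tendsto w atTop (𝓝 0) := by
    have hc : Continuous (fun t : ℝ => Complex.exp (t * Complex.I) - 1) := by fun_prop
    have := (hc.tendsto 0).comp ht
    simpa [Function.comp_def, hw] using this
  have hwn : Tendsto (fun n => ‖w n‖) atTop (𝓝 0) := by simpa using hw0.norm
  -- the exponent
  have hexp : Tendsto (fun n : ℕ => w n * (harmonic n : ℝ) - (s * √(Real.log n) : ℝ) * Complex.I)
      atTop (𝓝 (-(s : ℂ) ^ 2 / 2)) := by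
    have h1 : Tendsto (fun n : ℕ => w n * (((harmonic n : ℝ) - Real.log n : ℝ) : ℂ)) atTop (𝓝 0) := by
      have := hw0.mul ((Complex.continuous_ofReal.tendsto _).comp Real.tendsto_harmonic_sub_log)
      simpa using this
    have h2 : Tendsto (fun n : ℕ => (Real.log n : ℂ) * (w n - (s / √(Real.log n) : ℝ) * Complex.I
        + ((s / √(Real.log n) : ℝ) : ℂ) ^ 2 / 2)) atTop (𝓝 0) := by
      rw [tendsto_zero_iff_norm_tendsto_zero]
      have hb : Tendsto (fun n : ℕ => s ^ 2 * |s / √(Real.log n)|) atTop (𝓝 0) := by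
        simpa using (ht.abs).const_mul (s ^ 2)
      refine squeeze_zero' (Eventually.of_forall fun _ => norm_nonneg _) ?_ hb
      have e1 : ∀ᶠ n : ℕ in atTop, |s / √(Real.log n)| < 1 := by
        have := ht.abs
        rw [abs_zero] at this
        exact this.eventually_lt_const one_pos
      filter_upwards [e1, hT.eventually_gt_atTop 0] with n hn1 hn2
      set t := s / √(Real.log n) with htd
      have hLpos : 0 < Real.log n := Real.sqrt_pos.mp hn2
      have hs2 : s ^ 2 = t ^ 2 * Real.log n := by
        rw [htd, div_pow, Real.sq_sqrt hLpos.le]; field_simp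
      have hnt : ‖(t : ℂ) * Complex.I‖ = |t| := by simp
      have := Complex.exp_bound' (x := (t : ℂ) * Complex.I) (n := 3) (by
        rw [hnt]; norm_num; linarith)
      rw [hnt] at this
      simp [Finset.sum_range_succ, Nat.factorial] at this
      rw [norm_mul, Complex.norm_real, Real.norm_of_nonneg hLpos.le, hs2]
      have hh : ‖w n - t * Complex.I + (t : ℂ) ^ 2 / 2‖ ≤ |t| ^ 3 := by
        have he : w n - t * Complex.I + (t : ℂ) ^ 2 / 2
          = Complex.exp (t * Complex.I) - (1 + t * Complex.I + (t * Complex.I) ^ 2 / 2) := by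
          simp only [hw, mul_pow, Complex.I_sq]; ring
        rw [he]
        refine this.trans ?_
        nlinarith [pow_nonneg (abs_nonneg t) 3]
      calc _ ≤ Real.log n * |t| ^ 3 := by gcongr
        _ = _ := by rw [pow_succ, sq_abs]; ring
    have h3 := (h1.add h2).add_const (-(s : ℂ) ^ 2 / 2)
    rw [add_zero, zero_add] at h3
    refine h3.congr' ?_
    filter_upwards [hT.eventually_gt_atTop 0] with n hn2
    have hLpos : 0 < Real.log n := Real.sqrt_pos.mp hn2
    have hL : (Real.log n : ℂ) = (√(Real.log n) : ℂ) ^ 2 := by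
      norm_cast; rw [Real.sq_sqrt hLpos.le]
    have hne : (√(Real.log n) : ℂ) ≠ 0 := by exact_mod_cast hn2.ne'
    simp only [Complex.ofReal_sub, Complex.ofReal_div, Complex.ofReal_mul, hL]
    field_simp
    ring
  have hdiff : Tendsto (fun n : ℕ => cPsi n s - Complex.exp (w n * (harmonic n : ℝ)
      - (s * √(Real.log n) : ℝ) * Complex.I)) atTop (𝓝 0) := by
    rw [tendsto_zero_iff_norm_tendsto_zero]
    have hb : Tendsto (fun n => 2 * ‖w n‖ ^ 2) atTop (𝓝 0) := by
      simpa using (hwn.pow 2).const_mul 2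
    refine squeeze_zero' (Eventually.of_forall fun _ => norm_nonneg _) ?_ hb
    filter_upwards [hwn.eventually_lt_const one_pos] with n hn
    have := cPhi_approx n (s / √(Real.log n)) hn.le
    refine le_trans (le_of_eq ?_) this
    unfold cPsi
    rw [sub_eq_add_neg (w n * _), Complex.exp_add, ← neg_mul, ← sub_mul, norm_mul]
    have : ‖Complex.exp (-(s * √(Real.log n) : ℝ) * Complex.I)‖ = 1 := by
      have := Complex.norm_exp_ofReal_mul_I (-(s * √(Real.log n)))
      push_cast at this ⊢; exact this
    rw [this, mul_one]
  have := hdiff.add ((Complex.continuous_exp.tendsto _).comp hexp)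
  simpa using this

lemma orth (m : ℤ) :
    ∫ t in (-Real.pi)..Real.pi, Complex.exp (m * t * Complex.I)
      = if m = 0 then (2 * Real.pi : ℂ) else 0 := by
  split_ifs with h
  · subst h; simp; ring
  · have hm : (m * Complex.I : ℂ) ≠ 0 := by simp [h]
    have := integral_exp_mul_complex (a := -Real.pi) (b := Real.pi) hm
    have e : (fun t : ℝ => Complex.exp (m * t * Complex.I))
      = fun t : ℝ => Complex.exp (m * Complex.I * t) := by
      ext t; ring_nf
    rw [e, this]
    have : Complex.exp (m * Complex.I * (Real.pi : ℝ))
        = Complex.exp (m * Complex.I * ((-Real.pi : ℝ))) := by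
      rw [Complex.exp_eq_exp_iff_exists_int]
      refine ⟨m, ?_⟩
      push_cast; ring
    rw [this, sub_self, zero_div]

lemma inversion (n k : ℕ) (hk : k ∈ Finset.range (n+1)) :
    ∫ t in (-Real.pi)..Real.pi, cPhi n t * Complex.exp (-(k * t * Complex.I))
      = 2 * Real.pi * pcyc n k := by
  have e : ∀ t : ℝ, cPhi n t * Complex.exp (-(k * t * Complex.I))
      = ∑ l ∈ Finset.range (n+1), (pcyc n l : ℂ) *
          Complex.exp (((l : ℤ) - (k : ℤ) : ℤ) * t * Complex.I) := by
    intro t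
    rw [cPhi_eq, Finset.sum_mul]
    refine Finset.sum_congr rfl fun l _ => ?_
    rw [mul_assoc, ← Complex.exp_add]
    push_cast; ring_nf
  simp_rw [e]
  rw [intervalIntegral.integral_finsetSum]
  · simp_rw [intervalIntegral.integral_const_mul, orth]
    rw [Finset.sum_eq_single k]
    · simp; ring
    · intro l _ hl
      rw [if_neg, mul_zero]
      intro h; apply hl; omega
    · intro h; exact absurd hk h
  · intro l _
    apply Continuous.intervalIntegrable
    fun_prop

/-- normalised position -/
noncomputable def xpos (n k : ℕ) : ℝ := ((k : ℝ) - Real.log n) / √(Real.log n)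

lemma cPsi_mul (n k : ℕ) (s : ℝ) (hL : 0 < Real.log n) :
    cPsi n s * Complex.exp (-(s * xpos n k * Complex.I))
      = cPhi n (s / √(Real.log n)) *
        Complex.exp (-(k * (s / √(Real.log n) : ℝ) * Complex.I)) := by
  unfold cPsi xpos
  rw [mul_assoc, ← Complex.exp_add]
  congr 2
  have hs : 0 < √(Real.log n) := Real.sqrt_pos.mpr hL
  have hne : (√(Real.log n) : ℂ) ≠ 0 := by exact_mod_cast hs.ne'
  have hL : (Real.log n : ℂ) = (√(Real.log n) : ℂ) ^ 2 := by
    norm_cast; rw [Real.sq_sqrt hL.le]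
  simp only [Complex.ofReal_sub, Complex.ofReal_div, Complex.ofReal_mul, Complex.ofReal_natCast, hL]
  field_simp
  ring

lemma cPsi_sum (n : ℕ) (s : ℝ) (hL : 0 < Real.log n) :
    cPsi n s = ∑ k ∈ Finset.range (n+1),
      (pcyc n k : ℂ) * Complex.exp (Complex.I * xpos n k * s) := by
  unfold cPsi xpos
  rw [cPhi_eq, Finset.sum_mul]
  refine Finset.sum_congr rfl fun k _ => ?_
  rw [mul_assoc, ← Complex.exp_add]
  congr 2
  have hs : 0 < √(Real.log n) := Real.sqrt_pos.mpr hL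
  have hne : (√(Real.log n) : ℂ) ≠ 0 := by exact_mod_cast hs.ne'
  have hL : (Real.log n : ℂ) = (√(Real.log n) : ℂ) ^ 2 := by
    norm_cast; rw [Real.sq_sqrt hL.le]
  simp only [Complex.ofReal_sub, Complex.ofReal_div, Complex.ofReal_mul, Complex.ofReal_natCast, hL]
  field_simp
  ring

lemma inversion2 (n k : ℕ) (hk : k ∈ Finset.range (n+1)) (hL : 0 < Real.log n) :
    ∫ s in (-(Real.pi * √(Real.log n)))..(Real.pi * √(Real.log n)),
        cPsi n s * Complex.exp (-(s * xpos n k * Complex.I))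
      = 2 * Real.pi * (√(Real.log n) * pcyc n k : ℝ) := by
  have hs : √(Real.log n) ≠ 0 := (Real.sqrt_pos.mpr hL).ne'
  simp_rw [cPsi_mul n k _ hL]
  rw [intervalIntegral.integral_comp_div
    (fun t : ℝ => cPhi n t * Complex.exp (-(k * t * Complex.I))) hs, neg_div,
    mul_div_cancel_right₀ _ hs, inversion n k hk]
  simp
  ring

/-- truncated normalised char. function -/
noncomputable def cF (n : ℕ) : ℝ → ℂ :=
  (Set.Ioc (-(Real.pi * √(Real.log n))) (Real.pi * √(Real.log n))).indicator (cPsi n)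

lemma cF_meas (n : ℕ) : Measurable (cF n) :=
  (cPsi_cont n).measurable.indicator measurableSet_Ioc

lemma cF_bound (n : ℕ) (hn : 2 ≤ Real.log n) (s : ℝ) :
    ‖cF n s‖ ≤ Real.exp 4 * Real.exp (-(2 / Real.pi ^ 2) * s ^ 2) := by
  unfold cF
  by_cases h : s ∈ Set.Ioc (-(Real.pi * √(Real.log n))) (Real.pi * √(Real.log n))
  · rw [Set.indicator_of_mem h]
    exact cPsi_bound n s hn (abs_le.mpr ⟨h.1.le, h.2⟩)
  · rw [Set.indicator_of_notMem h, norm_zero]; positivity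

open MeasureTheory in
lemma bnd_integrable : Integrable
    (fun s : ℝ => Real.exp 4 * Real.exp (-(2 / Real.pi ^ 2) * s ^ 2)) :=
  (integrable_exp_neg_mul_sq (by positivity)).const_mul _

open MeasureTheory in
lemma cF_integrable (n : ℕ) (hn : 2 ≤ Real.log n) : Integrable (cF n) :=
  bnd_integrable.mono' (cF_meas n).aestronglyMeasurable
    (Filter.Eventually.of_forall (cF_bound n hn))

lemma gauss_norm (s : ℝ) : ‖Complex.exp (-(s : ℂ) ^ 2 / 2)‖ = Real.exp (-(1/2) * s ^ 2) := by
  have : (-(s : ℂ) ^ 2 / 2) = ((-(1/2) * s ^ 2 : ℝ) : ℂ) := by push_cast; ring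
  rw [this, ← Complex.ofReal_exp, Complex.norm_real, Real.norm_of_nonneg (Real.exp_pos _).le]

open MeasureTheory in
lemma gauss_integrable : Integrable (fun s : ℝ => Complex.exp (-(s : ℂ) ^ 2 / 2)) := by
  refine (integrable_exp_neg_mul_sq (b := 1/2) (by norm_num)).mono'
    (by fun_prop) (Filter.Eventually.of_forall fun s => ?_)
  rw [gauss_norm]

/-- the L1 error -/
noncomputable def cDelta (n : ℕ) : ℝ := ∫ s : ℝ, ‖cF n s - Complex.exp (-(s : ℂ) ^ 2 / 2)‖

open Filter Topology in
lemma ev_log (c : ℝ) : ∀ᶠ n : ℕ in atTop, c ≤ Real.log n :=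
  (Real.tendsto_log_atTop.comp tendsto_natCast_atTop_atTop).eventually_ge_atTop c

open Filter Topology MeasureTheory in
lemma cDelta_tendsto : Tendsto cDelta atTop (𝓝 0) := by
  unfold cDelta
  have h0 : ∫ s : ℝ, (0 : ℝ) = 0 := by simp
  rw [← h0]
  refine tendsto_integral_filter_of_dominated_convergence
    (fun s => Real.exp 4 * Real.exp (-(2 / Real.pi ^ 2) * s ^ 2) + Real.exp (-(1/2) * s ^ 2))
    ?_ ?_ ?_ ?_
  · refine Eventually.of_forall fun n => ?_
    have := cF_meas n
    exact Measurable.aestronglyMeasurable (by fun_prop)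
  · filter_upwards [ev_log 2] with n hn
    refine Eventually.of_forall fun s => ?_
    rw [norm_norm]
    refine (norm_sub_le _ _).trans ?_
    rw [gauss_norm]
    linarith [cF_bound n hn s]
  · exact bnd_integrable.add (integrable_exp_neg_mul_sq (b := 1/2) (by norm_num))
  · refine Eventually.of_forall fun s => ?_
    have h1 := (cPsi_tendsto s).sub_const (Complex.exp (-(s : ℂ) ^ 2 / 2))
    rw [sub_self] at h1
    have h2 := h1.norm
    rw [norm_zero] at h2
    refine h2.congr' ?_
    have hT : Tendsto (fun n : ℕ => Real.pi * √(Real.log n)) atTop atTop :=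
      tendsto_sqrt_log.const_mul_atTop Real.pi_pos
    filter_upwards [hT.eventually_gt_atTop |s|] with n hn
    unfold cF
    rw [Set.indicator_of_mem]
    exact ⟨(abs_lt.mp hn).1, (abs_lt.mp hn).2.le⟩

open MeasureTheory in
lemma gauss_fourier (b : ℝ) (hb : 0 < b) (x : ℝ) :
    ∫ s : ℝ, Complex.exp (Complex.I * x * s) * Complex.exp (-b * s ^ 2)
      = (√(Real.pi / b) * Real.exp (-x ^ 2 / (4 * b)) : ℝ) := by
  rw [fourierIntegral_gaussian (by simpa using hb)]
  push_cast
  congr 1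
  rw [Real.sqrt_eq_rpow, Complex.ofReal_cpow (by positivity)]
  push_cast; rfl

open MeasureTheory in
lemma llt (n k : ℕ) (hk : k ∈ Finset.range (n+1)) (hn : 2 ≤ Real.log n) :
    |√(Real.log n) * pcyc n k - (√(2 * Real.pi))⁻¹ * Real.exp (-(xpos n k) ^ 2 / 2)|
      ≤ cDelta n := by
  have hL : 0 < Real.log n := by linarith
  have hE : ∀ s : ℝ, ‖Complex.exp (-(s * xpos n k * Complex.I))‖ = 1 := by
    intro s
    have := Complex.norm_exp_ofReal_mul_I (-(s * xpos n k))
    push_cast at this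
    rw [neg_mul] at this; exact this
  have h1 : ∫ s : ℝ, cF n s * Complex.exp (-(s * xpos n k * Complex.I))
      = 2 * Real.pi * (√(Real.log n) * pcyc n k : ℝ) := by
    rw [← inversion2 n k hk hL, intervalIntegral.integral_of_le, ← integral_indicator measurableSet_Ioc]
    · congr 1; ext s
      unfold cF
      rw [Set.indicator_mul_left]
    · have : 0 ≤ Real.pi * √(Real.log n) := by positivity
      linarith
  have h2 : ∫ s : ℝ, Complex.exp (-(s : ℂ) ^ 2 / 2) * Complex.exp (-(s * xpos n k * Complex.I))
      = 2 * Real.pi * ((√(2 * Real.pi))⁻¹ * Real.exp (-(xpos n k) ^ 2 / 2) : ℝ) := by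
    have := gauss_fourier (1/2) (by norm_num) (-(xpos n k))
    have e : ∀ s : ℝ, Complex.exp (-(s : ℂ) ^ 2 / 2) * Complex.exp (-(s * xpos n k * Complex.I))
       = Complex.exp (Complex.I * (-(xpos n k) : ℝ) * s) * Complex.exp (-(1/2 : ℝ) * s ^ 2) := by
      intro s
      rw [← Complex.exp_add, ← Complex.exp_add]; push_cast; ring_nf
    simp_rw [e]
    rw [this]
    norm_cast
    have h3 : Real.pi / (1/2) = 2 * Real.pi := by ring
    have h4 : √(2 * Real.pi) = (2 * Real.pi) * (√(2 * Real.pi))⁻¹ := by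
      have : √(2 * Real.pi) ≠ 0 := by positivity
      field_simp
      rw [Real.sq_sqrt (by positivity)]
    rw [h3]
    conv_lhs => rw [h4]
    rw [mul_assoc]
    congr 3
    ring_nf
  have hi : ∀ f : ℝ → ℂ, Integrable f →
      Integrable (fun s : ℝ => f s * Complex.exp (-(s * xpos n k * Complex.I))) := by
    intro f hf
    refine hf.mul_bdd (c := 1) (by fun_prop) (Filter.Eventually.of_forall fun s => (hE s).le)
  have h3 : (2 * Real.pi * ((√(Real.log n) * pcyc n k
      - (√(2 * Real.pi))⁻¹ * Real.exp (-(xpos n k) ^ 2 / 2) : ℝ) : ℂ))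
      = ∫ s : ℝ, (cF n s - Complex.exp (-(s : ℂ) ^ 2 / 2))
        * Complex.exp (-(s * xpos n k * Complex.I)) := by
    simp_rw [sub_mul]
    rw [integral_sub (hi _ (cF_integrable n hn)) (hi _ gauss_integrable), h1, h2]
    push_cast; ring
  have h4 : 2 * Real.pi * |√(Real.log n) * pcyc n k
      - (√(2 * Real.pi))⁻¹ * Real.exp (-(xpos n k) ^ 2 / 2)| ≤ cDelta n := by
    have h5 := norm_integral_le_integral_norm (μ := volume) (fun s : ℝ =>
      (cF n s - Complex.exp (-(s : ℂ) ^ 2 / 2)) * Complex.exp (-(s * xpos n k * Complex.I)))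
    rw [← h3] at h5
    simp_rw [norm_mul, hE, mul_one] at h5
    rw [Complex.norm_real, Complex.norm_real, Real.norm_of_nonneg Real.pi_pos.le] at h5
    simpa [cDelta] using h5
  have := abs_nonneg (√(Real.log n) * pcyc n k
      - (√(2 * Real.pi))⁻¹ * Real.exp (-(xpos n k) ^ 2 / 2))
  nlinarith [Real.pi_gt_three]

open Filter Topology MeasureTheory in
lemma smooth_sum (m : ℕ) (hm : 1 ≤ m) :
    Tendsto (fun n : ℕ => ∑ k ∈ Finset.range (n+1),
      pcyc n k * Real.exp (-(m * (xpos n k) ^ 2 / 2))) atTop (𝓝 (√((m : ℝ) + 1))⁻¹) := by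
  have hm0 : (0 : ℝ) < m := by exact_mod_cast hm
  set b : ℝ := 1 / (2 * m) with hb
  have hbpos : 0 < b := by positivity
  have hgn : ∀ s : ℝ, ‖Complex.exp (-b * s ^ 2)‖ = Real.exp (-b * s ^ 2) := by
    intro s
    have : (-b * s ^ 2 : ℂ) = ((-b * s ^ 2 : ℝ) : ℂ) := by push_cast; ring
    rw [this, ← Complex.ofReal_exp, Complex.norm_real, Real.norm_of_nonneg (Real.exp_pos _).le]
  have hlim : Tendsto (fun n : ℕ => ∫ s : ℝ, cPsi n s * Complex.exp (-b * s ^ 2)) atTop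
      (𝓝 (∫ s : ℝ, Complex.exp (-(s : ℂ) ^ 2 / 2) * Complex.exp (-b * s ^ 2))) := by
    refine tendsto_integral_filter_of_dominated_convergence
      (fun s => Real.exp (-b * s ^ 2)) ?_ ?_ (integrable_exp_neg_mul_sq hbpos) ?_
    · refine Eventually.of_forall fun n => ?_
      have := cPsi_cont n
      exact Continuous.aestronglyMeasurable (by fun_prop)
    · refine Eventually.of_forall fun n => Eventually.of_forall fun s => ?_
      rw [norm_mul, hgn]
      exact mul_le_of_le_one_left (Real.exp_pos _).le (cPsi_le_one n s)
    · exact Eventually.of_forall fun s => (cPsi_tendsto s).mul_const _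
  have hval : ∫ s : ℝ, Complex.exp (-(s : ℂ) ^ 2 / 2) * Complex.exp (-b * s ^ 2)
      = (√(Real.pi / (b + 1/2)) : ℝ) := by
    have := gauss_fourier (b + 1/2) (by positivity) 0
    simp only [Complex.ofReal_zero, mul_zero, zero_mul, Complex.exp_zero, one_mul] at this
    have e : ∀ s : ℝ, Complex.exp (-(s : ℂ) ^ 2 / 2) * Complex.exp (-b * s ^ 2)
        = Complex.exp (-(b + 1/2 : ℝ) * s ^ 2) := by
      intro s; rw [← Complex.exp_add]; push_cast; ring_nf
    simp_rw [e]
    rw [this]; simp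
  rw [hval] at hlim
  have hsum : ∀ᶠ n : ℕ in atTop, ∫ s : ℝ, cPsi n s * Complex.exp (-b * s ^ 2)
      = ((√(Real.pi / b) * ∑ k ∈ Finset.range (n+1),
      pcyc n k * Real.exp (-(m * (xpos n k) ^ 2 / 2)) : ℝ) : ℂ) := by
    filter_upwards [ev_log 2] with n hn
    have hL : 0 < Real.log n := by linarith
    simp_rw [cPsi_sum n _ hL, Finset.sum_mul, mul_assoc (pcyc n _ : ℂ)]
    rw [integral_finsetSum]
    · simp_rw [integral_const_mul, gauss_fourier b hbpos]
      push_cast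
      rw [Finset.mul_sum]
      refine Finset.sum_congr rfl fun k _ => ?_
      have : (-(xpos n k : ℂ) ^ 2 / (4 * b)) = -(m * (xpos n k : ℂ) ^ 2 / 2) := by
        have : (m : ℂ) ≠ 0 := by exact_mod_cast hm0.ne'
        rw [hb]; push_cast; field_simp; ring
      rw [this]; ring
    · intro k _
      refine Integrable.const_mul ?_ _
      refine (integrable_exp_neg_mul_sq hbpos).mono'
        (Continuous.aestronglyMeasurable (by fun_prop)) (Eventually.of_forall fun s => ?_)
      rw [norm_mul, hgn]
      have : ‖Complex.exp (Complex.I * (xpos n k) * s)‖ = 1 := by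
        have := Complex.norm_exp_ofReal_mul_I (xpos n k * s)
        rw [← this]; push_cast; ring_nf
      rw [this, one_mul]
  have h1 := hlim.congr' hsum
  have h2 : Tendsto (fun n : ℕ => √(Real.pi / b) * ∑ k ∈ Finset.range (n+1),
      pcyc n k * Real.exp (-(m * (xpos n k) ^ 2 / 2))) atTop (𝓝 (√(Real.pi / (b + 1/2)))) := by
    have := (Complex.continuous_re.tendsto _).comp h1
    simpa only [Function.comp_def, Complex.ofReal_re] using this
  have h3 := h2.const_mul (√(Real.pi / b))⁻¹
  have hne : √(Real.pi / b) ≠ 0 := by positivity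
  simp_rw [inv_mul_cancel_left₀ hne] at h3
  convert! h3 using 2
  rw [← Real.sqrt_inv, ← Real.sqrt_inv, ← Real.sqrt_mul (by positivity)]
  congr 1
  rw [hb]
  have := Real.pi_ne_zero
  field_simp
  ring

open Filter Topology in
lemma main_tendsto (m : ℕ) (hm : 1 ≤ m) :
    Tendsto (fun n : ℕ => ∑ k ∈ Finset.range (n+1),
      pcyc n k * (√(Real.log n) * pcyc n k) ^ m) atTop
      (𝓝 ((√(2 * Real.pi))⁻¹ ^ m * (√((m : ℝ) + 1))⁻¹)) := by
  have h1 := (smooth_sum m hm).const_mul ((√(2 * Real.pi))⁻¹ ^ m)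
  have hc1 : (√(2 * Real.pi))⁻¹ ≤ 1/2 := by
    rw [one_div]
    apply inv_anti₀ (by norm_num)
    apply Real.le_sqrt_of_sq_le
    nlinarith [Real.pi_gt_three]
  have hc0 : 0 ≤ (√(2 * Real.pi))⁻¹ := by positivity
  have hd : Tendsto (fun n : ℕ => ∑ k ∈ Finset.range (n+1),
      pcyc n k * (√(Real.log n) * pcyc n k) ^ m
      - (√(2 * Real.pi))⁻¹ ^ m * ∑ k ∈ Finset.range (n+1),
      pcyc n k * Real.exp (-(m * (xpos n k) ^ 2 / 2))) atTop (𝓝 0) := by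
    rw [tendsto_zero_iff_norm_tendsto_zero]
    have hb : Tendsto (fun n : ℕ => cDelta n * m) atTop (𝓝 0) := by
      simpa using cDelta_tendsto.mul_const (m : ℝ)
    refine squeeze_zero' (Eventually.of_forall fun _ => norm_nonneg _) ?_ hb
    filter_upwards [ev_log 2, cDelta_tendsto.eventually_lt_const (u := 1/2) (by norm_num)]
      with n hn hδ
    rw [Finset.mul_sum, ← Finset.sum_sub_distrib]
    refine (norm_sum_le _ _).trans ?_
    calc _ ≤ ∑ k ∈ Finset.range (n+1), pcyc n k * (cDelta n * m) := by
          refine Finset.sum_le_sum fun k hk => ?_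
          set A := √(Real.log n) * pcyc n k with hA
          set B := (√(2 * Real.pi))⁻¹ * Real.exp (-(xpos n k) ^ 2 / 2) with hB
          have hAB : |A - B| ≤ cDelta n := llt n k hk hn
          have hBm : B ^ m = (√(2 * Real.pi))⁻¹ ^ m * Real.exp (-(m * (xpos n k) ^ 2 / 2)) := by
            rw [hB, mul_pow, ← Real.exp_nat_mul]; congr 2; ring
          have e : pcyc n k * A ^ m - (√(2 * Real.pi))⁻¹ ^ m *
              (pcyc n k * Real.exp (-(m * (xpos n k) ^ 2 / 2))) = pcyc n k * (A ^ m - B ^ m) := by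
            rw [hBm]; ring
          rw [e, norm_mul, Real.norm_of_nonneg (pcyc_nonneg n k), Real.norm_eq_abs]
          refine mul_le_mul_of_nonneg_left ?_ (pcyc_nonneg n k)
          have hA0 : 0 ≤ A := mul_nonneg (Real.sqrt_nonneg _) (pcyc_nonneg n k)
          have hB0 : 0 ≤ B := by positivity
          have hB1 : B ≤ 1/2 := by
            have : Real.exp (-(xpos n k) ^ 2 / 2) ≤ 1 := by
              rw [Real.exp_le_one_iff]; nlinarith [sq_nonneg (xpos n k)]
            calc B ≤ (√(2 * Real.pi))⁻¹ * 1 := by rw [hB]; gcongr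
              _ ≤ 1/2 := by linarith
          have hA1 : A ≤ 1 := by linarith [(abs_le.mp hAB).2]
          refine (abs_pow_sub_pow_le A B m).trans ?_
          have hmax : max |A| |B| ≤ 1 := by
            rw [abs_of_nonneg hA0, abs_of_nonneg hB0]
            exact max_le hA1 (by linarith)
          have hp : max |A| |B| ^ (m - 1) ≤ 1 :=
            pow_le_one₀ (le_max_of_le_left (abs_nonneg _)) hmax
          calc |A - B| * m * max |A| |B| ^ (m - 1) ≤ |A - B| * m * 1 := by gcongr
            _ ≤ cDelta n * m := by rw [mul_one]; gcongr
      _ = cDelta n * m := by rw [← Finset.sum_mul, pcyc_sum, one_mul]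
  have := hd.add h1
  simpa using this

theorem stmt_7 (r : ℕ) (hr : 2 ≤ r) :
    Filter.Tendsto (fun n : ℕ => Er r n * (Real.log n) ^ (((r : ℝ) - 1) / 2))
      Filter.atTop
      (nhds (1 / ((2 * Real.pi) ^ (((r : ℝ) - 1) / 2) * Real.sqrt r))) := by
  obtain ⟨m, rfl⟩ : ∃ m, r = m + 1 := ⟨r - 1, by omega⟩
  have hpow : ∀ x : ℝ, 0 ≤ x → x ^ ((((m + 1 : ℕ) : ℝ) - 1) / 2) = (√x) ^ m := by
    intro x hx
    rw [Real.sqrt_eq_rpow, ← Real.rpow_natCast, ← Real.rpow_mul hx]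
    congr 1; push_cast; ring
  have h := main_tendsto m (by omega)
  have hc : 1 / ((2 * Real.pi) ^ ((((m + 1 : ℕ) : ℝ) - 1) / 2) * Real.sqrt ((m + 1 : ℕ) : ℝ))
      = (√(2 * Real.pi))⁻¹ ^ m * (√((m : ℝ) + 1))⁻¹ := by
    rw [hpow _ (by positivity), one_div, mul_inv, inv_pow]
    push_cast; rfl
  rw [hc]
  refine h.congr fun n => ?_
  rw [Er_eq _ _ (by omega), hpow _ (Real.log_natCast_nonneg n), Finset.sum_mul]
  refine Finset.sum_congr rfl fun k _ => ?_
  rw [mul_pow]; ring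
end

section
/- Fix an integer r ≥ 2. The series A_r := Σ_{m=0}^∞ W_r(m) converges, and n^r · W_r(n) → A_r as n → ∞; that is, W_r(n) ∼ A_r / n^r. -/
/-- The cycle structure of a permutation of `n` letters: the multiset of the lengths
of its disjoint cycles, including fixed points. -/
def cycleStruct {n : ℕ} (σ : Equiv.Perm (Fin n)) : Multiset ℕ :=
  σ.cycleType + Multiset.replicate (n - σ.cycleType.sum) 1

/-- W_r(n): the probability that `r` independent uniformly random permutations of `n`
letters all have the same cycle structure (note `W r 0 = 1`). -/
noncomputable def W (r n : ℕ) : ℝ :=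
  (Nat.card {v : Fin r → Equiv.Perm (Fin n) //
      ∀ i j, cycleStruct (v i) = cycleStruct (v j)} : ℝ) / (n.factorial : ℝ) ^ r

open Finset in
/-- size of the centralizer of a permutation with cycle structure `μ` -/
def zz (μ : Multiset ℕ) : ℕ := μ.prod * ∏ j ∈ μ.toFinset, (μ.count j).factorial

noncomputable def pw (μ : Multiset ℕ) : ℝ := ((zz μ : ℕ) : ℝ)⁻¹

lemma zz_of_subset (μ : Multiset ℕ) (J : Finset ℕ) (h : μ.toFinset ⊆ J) :
    zz μ = μ.prod * ∏ j ∈ J, (μ.count j).factorial := by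
  unfold zz
  congr 1
  apply Finset.prod_subset h
  intro x _ hx
  rw [Multiset.mem_toFinset] at hx
  simp [Multiset.count_eq_zero_of_notMem hx]

lemma zz_cons (j : ℕ) (μ : Multiset ℕ) : zz (j ::ₘ μ) = zz μ * (j * (μ.count j + 1)) := by
  rw [zz_of_subset (j ::ₘ μ) (insert j μ.toFinset) (by simp),
    zz_of_subset μ (insert j μ.toFinset) (by simp),
    ← Finset.mul_prod_erase _ _ (Finset.mem_insert_self _ _),
    ← Finset.mul_prod_erase _ _ (Finset.mem_insert_self _ _)]
  have : ∏ x ∈ (insert j μ.toFinset).erase j, (Multiset.count x (j ::ₘ μ)).factorial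
      = ∏ x ∈ (insert j μ.toFinset).erase j, (Multiset.count x μ).factorial := by
    apply Finset.prod_congr rfl
    intro x hx
    rw [Multiset.count_cons_of_ne (Finset.ne_of_mem_erase hx)]
  rw [this, Multiset.prod_cons, Multiset.count_cons_self, Nat.factorial_succ]
  ring

lemma pw_nonneg (μ : Multiset ℕ) : 0 ≤ pw μ := by unfold pw; positivity

lemma pw_cons_le (j : ℕ) (μ : Multiset ℕ) : pw (j ::ₘ μ) ≤ pw μ * (j : ℝ)⁻¹ := by
  unfold pw
  rw [zz_cons]
  push_cast
  rw [mul_inv, mul_inv]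
  have h1 : ((μ.count j : ℝ) + 1)⁻¹ ≤ 1 := inv_le_one_of_one_le₀ (by simp)
  have : (0:ℝ) ≤ (j:ℝ)⁻¹ := by positivity
  gcongr
  nlinarith

lemma pw_cons_eq (j : ℕ) (μ : Multiset ℕ) (h : j ∉ μ) : pw (j ::ₘ μ) = pw μ * (j : ℝ)⁻¹ := by
  unfold pw
  rw [zz_cons, Multiset.count_eq_zero_of_notMem h]
  push_cast
  rw [mul_inv]; simp

lemma pw_eq_zero (μ : Multiset ℕ) (h : 0 ∈ μ) : pw μ = 0 := by
  simp [pw, zz, Multiset.prod_eq_zero h]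

/-! ### Counting -/

lemma cycleType_sum_le {n : ℕ} (σ : Equiv.Perm (Fin n)) : σ.cycleType.sum ≤ n := by
  rw [Equiv.Perm.sum_cycleType]
  simpa using Finset.card_le_univ σ.support

def partOf {n : ℕ} (σ : Equiv.Perm (Fin n)) : n.Partition where
  parts := cycleStruct σ
  parts_pos := by
    intro i hi
    rw [cycleStruct, Multiset.mem_add] at hi
    rcases hi with hi | hi
    · exact lt_of_lt_of_le (by norm_num) (Equiv.Perm.two_le_of_mem_cycleType hi)
    · rw [Multiset.eq_of_mem_replicate hi]; norm_num
  parts_sum := by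
    have := cycleType_sum_le σ
    simp [cycleStruct]; omega

lemma count_struct (n : ℕ) (l : n.Partition) :
    ((Finset.univ.filter (fun σ : Equiv.Perm (Fin n) => cycleStruct σ = l.parts)).card : ℝ)
      = n.factorial * pw l.parts := by
  set m := l.parts with hm
  set c := m.filter (fun a => 2 ≤ a) with hc
  set k := m.count 1 with hk
  have hmc : m = c + Multiset.replicate k 1 := by
    ext a
    rw [Multiset.count_add, Multiset.count_replicate, hc, Multiset.count_filter]
    rcases Nat.lt_or_ge a 2 with h | h
    · interval_cases a
      · have : 0 ∉ m := fun h => by simpa using l.parts_pos h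
        simp [this]
      · simp [hk]
    · rw [if_pos h, if_neg (by omega)]; simp
  have hsum : c.sum + k = n := by
    have := l.parts_sum
    rw [← hm, hmc] at this
    simpa using this
  have hc2 : ∀ a ∈ c, 2 ≤ a := fun a ha => (Multiset.mem_filter.1 ha).2
  have hset : (Finset.univ.filter (fun σ : Equiv.Perm (Fin n) => cycleStruct σ = m))
      = Finset.univ.filter (fun σ : Equiv.Perm (Fin n) => σ.cycleType = c) := by
    ext σ
    simp only [Finset.mem_filter, Finset.mem_univ, true_and]
    constructor
    · intro h
      rw [hc, ← h, cycleStruct, Multiset.filter_add,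
        Multiset.filter_eq_self.2 (fun _ => Equiv.Perm.two_le_of_mem_cycleType),
        Multiset.filter_eq_nil.2]
      · simp
      · intro a ha
        rw [Multiset.eq_of_mem_replicate ha]; norm_num
    · intro h
      rw [cycleStruct, h, hmc]
      congr 2
      omega
  rw [hset]
  have key := Equiv.Perm.card_of_cycleType_mul_eq (Fin n) c
  rw [Fintype.card_fin, if_pos ⟨by omega, hc2⟩] at key
  have hz : zz m = (n - c.sum).factorial * c.prod * ∏ a ∈ c.toFinset, (c.count a).factorial := by
    have h1 : (1:ℕ) ∉ c := fun h => by simpa using hc2 1 h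
    rw [zz_of_subset m (insert 1 c.toFinset), Finset.prod_insert (by simpa using h1)]
    · rw [← hk, show n - c.sum = k by omega]
      have : ∏ x ∈ c.toFinset, (m.count x).factorial = ∏ x ∈ c.toFinset, (c.count x).factorial := by
        apply Finset.prod_congr rfl
        intro x hx
        rw [hc, Multiset.count_filter, if_pos (hc2 x (by simpa using hx))]
      rw [this, hmc]
      simp
      ring
    · rw [hmc]
      intro a
      simp only [Multiset.toFinset_add, Finset.mem_union, Multiset.mem_toFinset, Finset.mem_insert]
      rintro (h | h)
      · exact Or.inr h
      · exact Or.inl (Multiset.eq_of_mem_replicate h)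
  rw [← hz] at key
  have hne : zz m ≠ 0 := by
    intro h
    rw [h, mul_zero] at key
    exact (Nat.factorial_ne_zero n) key.symm
  unfold pw
  rw [← key]
  push_cast
  rw [mul_inv_cancel_right₀ (Nat.cast_ne_zero.2 hne)]

lemma W_eq (r n : ℕ) (hr : r ≠ 0) : W r n = ∑ l : n.Partition, pw l.parts ^ r := by
  classical
  have hcard : Nat.card {v : Fin r → Equiv.Perm (Fin n) //
      ∀ i j, cycleStruct (v i) = cycleStruct (v j)} = ∑ l : n.Partition,
      (Finset.univ.filter (fun σ : Equiv.Perm (Fin n) => cycleStruct σ = l.parts)).card ^ r := by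
    rw [Nat.card_eq_fintype_card, Fintype.card_subtype]
    have : (Finset.univ.filter (fun v : Fin r → Equiv.Perm (Fin n) =>
        ∀ i j, cycleStruct (v i) = cycleStruct (v j))) =
        (Finset.univ : Finset n.Partition).biUnion (fun l => Fintype.piFinset (fun _ : Fin r =>
          Finset.univ.filter (fun σ : Equiv.Perm (Fin n) => cycleStruct σ = l.parts))) := by
      ext v
      simp only [Finset.mem_filter, Finset.mem_univ, true_and, Finset.mem_biUnion,
        Fintype.mem_piFinset]
      constructor
      · intro h
        exact ⟨partOf (v ⟨0, Nat.pos_of_ne_zero hr⟩), fun i => h i _⟩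
      · rintro ⟨l, hl⟩ i j
        rw [hl, hl]
    rw [this, Finset.card_biUnion]
    · simp
    · intro l _ l' _ hne
      rw [Function.onFun, Finset.disjoint_left]
      intro v hv hv'
      simp only [Finset.mem_filter, Finset.mem_univ, true_and, Fintype.mem_piFinset] at hv hv'
      apply hne
      ext1
      rw [← hv ⟨0, Nat.pos_of_ne_zero hr⟩, hv']
  unfold W
  rw [hcard]
  push_cast
  rw [Finset.sum_div]
  apply Finset.sum_congr rfl
  intro l _
  rw [count_struct, mul_pow, mul_div_assoc, mul_comm, div_mul_cancel₀]
  positivity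

/-! ### Summability -/

lemma summable_main (r : ℕ) (hr : 2 ≤ r) (c : ℝ) (hc : 0 ≤ c) :
    Summable (fun μ : Multiset ℕ => c ^ (Multiset.card μ) * pw μ ^ r) := by
  classical
  set y : ℕ → ℝ := fun j => c * ((j : ℝ) ^ r)⁻¹ with hy
  have hy0 : ∀ j, 0 ≤ y j := fun j => by rw [hy]; positivity
  have hys : Summable y := (Real.summable_nat_pow_inv.2 (by omega)).mul_left c
  apply summable_of_sum_le (c := Real.exp (∑' j, y j))
  · intro μ
    have := pw_nonneg μ
    simp only [Pi.zero_apply]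
    positivity
  intro S
  set J : Finset ℕ := S.biUnion Multiset.toFinset with hJ
  set K : ℕ := S.sup Multiset.card + 1 with hK
  have hsub : ∀ μ ∈ S, μ.toFinset ⊆ J := fun μ h => Finset.subset_biUnion_of_mem Multiset.toFinset h
  set e : Multiset ℕ → (J → ℕ) := fun μ i => μ.count (i : ℕ) with he
  have hterm : ∀ μ ∈ S, c ^ (Multiset.card μ) * pw μ ^ r
      ≤ ∏ i : J, (y i ^ (e μ i) / (e μ i).factorial) := by
    intro μ hμ
    have h1 : ∏ i : J, (y i ^ (e μ i) / (e μ i).factorial)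
        = ∏ j ∈ J, (y j ^ (μ.count j) / (μ.count j).factorial) :=
      Finset.prod_coe_sort J (fun j => y j ^ (μ.count j) / ((μ.count j).factorial : ℝ))
    rw [h1]
    have hcardμ : Multiset.card μ = ∑ j ∈ J, μ.count j := by
      symm
      exact Multiset.sum_count_eq_card (fun a ha => hsub μ hμ (by simpa using ha))
    have hprodμ : μ.prod = ∏ j ∈ J, j ^ μ.count j := by
      exact Finset.prod_multiset_count_of_subset μ J (hsub μ hμ)
    rw [pw, zz_of_subset μ J (hsub μ hμ), hcardμ, hprodμ, ← Finset.prod_pow_eq_pow_sum,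
      ← Finset.prod_mul_distrib]
    push_cast
    rw [← Finset.prod_inv_distrib, ← Finset.prod_pow, ← Finset.prod_mul_distrib]
    apply Finset.prod_le_prod
    · intro i _; positivity
    · intro i _
      have h2 : (((μ.count i).factorial : ℝ) ^ r)⁻¹ ≤ ((μ.count i).factorial : ℝ)⁻¹ := by
        apply inv_anti₀ (by positivity)
        apply le_self_pow₀ _ (by omega)
        exact_mod_cast Nat.factorial_pos _
      rw [hy, mul_inv, mul_pow, inv_pow, inv_pow, ← mul_assoc, div_eq_mul_inv]
      apply mul_le_mul _ h2 (by positivity) (by positivity)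
      rw [mul_pow, inv_pow, ← pow_mul, ← pow_mul, mul_comm r]
  have hinj : Set.InjOn e S := by
    intro μ hμ ν hν h
    ext a
    by_cases ha : a ∈ J
    · exact congrFun h ⟨a, ha⟩
    · rw [Multiset.count_eq_zero_of_notMem, Multiset.count_eq_zero_of_notMem]
      · exact fun h => ha (hsub ν hν (by simpa using h))
      · exact fun h => ha (hsub μ hμ (by simpa using h))
  calc ∑ μ ∈ S, c ^ (Multiset.card μ) * pw μ ^ r
      ≤ ∑ μ ∈ S, ∏ i : J, (y i ^ (e μ i) / (e μ i).factorial) := Finset.sum_le_sum hterm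
    _ = ∑ x ∈ S.image e, ∏ i : J, (y i ^ (x i) / (x i).factorial) := by
        rw [Finset.sum_image hinj]
    _ ≤ ∑ x ∈ Fintype.piFinset (fun _ : J => Finset.range K),
          ∏ i : J, (y i ^ (x i) / (x i).factorial) := by
        apply Finset.sum_le_sum_of_subset_of_nonneg
        · intro x hx
          obtain ⟨μ, hμ, rfl⟩ := Finset.mem_image.1 hx
          rw [Fintype.mem_piFinset]
          intro i
          rw [Finset.mem_range, hK, Nat.lt_succ_iff]
          exact (Multiset.count_le_card _ _).trans (Finset.le_sup (f := Multiset.card) hμ)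
        · intro x _ _
          apply Finset.prod_nonneg
          intro i _
          have := hy0 i
          positivity
    _ = ∏ i : J, ∑ k ∈ Finset.range K, (y i ^ k / k.factorial) :=
        Finset.sum_prod_piFinset (Finset.range K)
          (fun (i : J) (k : ℕ) => y i ^ k / (k.factorial : ℝ))
    _ ≤ ∏ i : J, Real.exp (y i) := by
        apply Finset.prod_le_prod
        · intro i _
          apply Finset.sum_nonneg
          intro k _
          have := hy0 i
          positivity
        · intro i _
          exact Real.sum_le_exp_of_nonneg (hy0 i) K
    _ = Real.exp (∑ j ∈ J, y j) := by
        rw [Real.exp_sum, ← Finset.prod_coe_sort J (fun j => Real.exp (y j))]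
    _ ≤ Real.exp (∑' j, y j) := by
        apply Real.exp_le_exp.2
        exact hys.sum_le_tsum J (fun j _ => hy0 j)

lemma hasSum_W (r : ℕ) (hr : 2 ≤ r) :
    HasSum (fun m => W r m) (∑' μ : Multiset ℕ, pw μ ^ r) := by
  have hs : Summable (fun μ : Multiset ℕ => pw μ ^ r) := by
    simpa using summable_main r hr 1 zero_le_one
  have h1 := (Equiv.hasSum_iff (Equiv.sigmaFiberEquiv (Multiset.sum : Multiset ℕ → ℕ))).2 hs.hasSum
  refine h1.sigma ?_
  intro n
  rw [W_eq r n (by omega)]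
  let g : n.Partition → {μ : Multiset ℕ // μ.sum = n} := fun l => ⟨l.parts, l.parts_sum⟩
  have hg : Function.Injective g := by
    intro l l' h
    ext1
    exact congrArg Subtype.val h
  refine (hg.hasSum_iff ?_).1 (hasSum_fintype (fun l : n.Partition => pw l.parts ^ r))
  rintro ⟨μ, hμ⟩ hx
  have : pw μ = 0 := by
    apply pw_eq_zero
    by_contra h0
    exact hx ⟨⟨μ, fun {i} hi => Nat.pos_of_ne_zero (fun h => h0 (h ▸ hi)), hμ⟩, rfl⟩
  simp [this]
  omega

/-! ### Removing the largest part -/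

open Classical in
noncomputable def TT (r n : ℕ) (μ : Multiset ℕ) : ℝ :=
  if μ.sum ≤ n ∧ ∀ i ∈ μ, i ≤ n - μ.sum then (n : ℝ) ^ r * pw ((n - μ.sum) ::ₘ μ) ^ r else 0

lemma sup_mem_of_ne (m : Multiset ℕ) (h : m ≠ 0) : m.sup ∈ m := by
  induction m using Multiset.induction with
  | empty => exact absurd rfl h
  | cons a s ih =>
    rw [Multiset.sup_cons]
    by_cases hs : s = 0
    · simp [hs]
    · rcases le_total a s.sup with h | h
      · rw [sup_eq_right.2 h]; exact Multiset.mem_cons_of_mem (ih hs)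
      · rw [sup_eq_left.2 h]; exact Multiset.mem_cons_self _ _

lemma hasSum_TT (r n : ℕ) (hr : r ≠ 0) (hn : n ≠ 0) :
    HasSum (TT r n) ((n : ℝ) ^ r * W r n) := by
  rw [W_eq r n hr, Finset.mul_sum]
  let g : n.Partition → Multiset ℕ := fun l => l.parts.erase l.parts.sup
  have hmem : ∀ l : n.Partition, l.parts.sup ∈ l.parts := by
    intro l
    apply sup_mem_of_ne
    intro h
    have := l.parts_sum
    rw [h] at this
    exact hn (by simpa using this.symm)
  have hcons : ∀ l : n.Partition, l.parts.sup ::ₘ g l = l.parts := fun l =>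
    Multiset.cons_erase (hmem l)
  have hsum : ∀ l : n.Partition, l.parts.sup + (g l).sum = n := by
    intro l
    rw [← Multiset.sum_cons, hcons, l.parts_sum]
  have hsup : ∀ l : n.Partition, n - (g l).sum = l.parts.sup := by
    intro l
    have := hsum l
    omega
  have hg : Function.Injective g := by
    intro l l' h
    ext1
    rw [← hcons l, ← hcons l', ← hsup l, ← hsup l', h]
  have hT : ∀ l, TT r n (g l) = (n : ℝ) ^ r * pw l.parts ^ r := by
    intro l
    rw [TT, if_pos, hsup, hcons]
    refine ⟨by have := hsum l; omega, ?_⟩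
    intro i hi
    rw [hsup]
    exact Multiset.le_sup (Multiset.mem_of_mem_erase hi)
  have h := hasSum_fintype (fun l : n.Partition => (n : ℝ) ^ r * pw l.parts ^ r)
  simp_rw [← hT] at h ⊢
  refine (hg.hasSum_iff ?_).1 h
  intro μ hμ
  rw [TT]
  split_ifs with hc
  · have : pw ((n - μ.sum) ::ₘ μ) = 0 := by
      apply pw_eq_zero
      by_contra h0
      apply hμ
      have hp : ((n - μ.sum) ::ₘ μ).sum = n := by
        rw [Multiset.sum_cons]; omega
      refine ⟨⟨(n - μ.sum) ::ₘ μ, fun {i} hi => Nat.pos_of_ne_zero (fun h => h0 (h ▸ hi)), hp⟩, ?_⟩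
      have hs : ((n - μ.sum) ::ₘ μ).sup = n - μ.sum := by
        rw [Multiset.sup_cons, sup_eq_left]
        exact Multiset.sup_le.2 hc.2
      simp only [g, hs, Multiset.erase_cons_head]
    rw [this, zero_pow hr, mul_zero]
  · rfl

lemma TT_nonneg (r n : ℕ) (μ : Multiset ℕ) : 0 ≤ TT r n μ := by
  unfold TT
  have := pw_nonneg ((n - μ.sum) ::ₘ μ)
  split_ifs <;> positivity

lemma TT_le (r n : ℕ) (μ : Multiset ℕ) :
    TT r n μ ≤ ((2 : ℝ) ^ r) ^ (Multiset.card μ) * pw μ ^ r := by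
  have hp := pw_nonneg μ
  unfold TT
  split_ifs with hc
  · have hp' := pw_nonneg ((n - μ.sum) ::ₘ μ)
    rw [← pow_mul, mul_comm r, pow_mul, ← mul_pow, ← mul_pow]
    apply pow_le_pow_left₀ (by positivity)
    set j := n - μ.sum with hj
    have h1 : n ≤ j * (1 + Multiset.card μ) := by
      have := Multiset.sum_le_card_nsmul μ j hc.2
      rw [smul_eq_mul] at this
      have h3 : n = j + μ.sum := by omega
      nlinarith
    have h2 : 1 + Multiset.card μ ≤ 2 ^ Multiset.card μ := by
      rw [add_comm]; exact Nat.lt_two_pow_self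
    have h3 : (n : ℝ) ≤ j * 2 ^ Multiset.card μ := by
      exact_mod_cast h1.trans (Nat.mul_le_mul_left _ h2)
    calc (n : ℝ) * pw (j ::ₘ μ) ≤ (j * 2 ^ Multiset.card μ) * (pw μ * (j : ℝ)⁻¹) := by
          apply mul_le_mul h3 (pw_cons_le j μ) hp' (by positivity)
      _ = (j * (j : ℝ)⁻¹) * (2 ^ Multiset.card μ * pw μ) := by ring
      _ ≤ 1 * (2 ^ Multiset.card μ * pw μ) := by
          apply mul_le_mul_of_nonneg_right mul_inv_le_one (by positivity)
      _ = _ := one_mul _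
  · positivity

lemma TT_tendsto (r : ℕ) (μ : Multiset ℕ) :
    Filter.Tendsto (fun n => TT r n μ) Filter.atTop (nhds (pw μ ^ r)) := by
  set s := μ.sum with hs
  have h1 : Filter.Tendsto (fun n : ℕ => (pw μ * ((n : ℝ) / ((n : ℝ) + (-(s:ℝ))))) ^ r)
      Filter.atTop (nhds ((pw μ * 1) ^ r)) :=
    ((tendsto_natCast_div_add_atTop (-(s:ℝ))).const_mul _).pow r
  rw [mul_one] at h1
  refine h1.congr' ?_
  filter_upwards [Filter.eventually_gt_atTop (2 * s)] with n hn
  have hle : ∀ i ∈ μ, i ≤ s := fun i hi => Multiset.le_sum_of_mem hi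
  rw [TT, if_pos ⟨by omega, fun i hi => by have := hle i hi; omega⟩, pw_cons_eq, ← mul_pow]
  · rw [Nat.cast_sub (by omega)]
    congr 1
    rw [← hs, ← sub_eq_add_neg, div_eq_mul_inv]
    ring
  · intro h
    have := hle _ h
    omega

theorem stmt_9 (r : ℕ) (hr : 2 ≤ r) :
    Summable (fun m : ℕ => W r m) ∧
      Filter.Tendsto (fun n : ℕ => (n : ℝ) ^ r * W r n) Filter.atTop
        (nhds (∑' m : ℕ, W r m)) := by
  have hW := hasSum_W r hr
  refine ⟨hW.summable, ?_⟩
  rw [hW.tsum_eq]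
  have h := tendsto_tsum_of_dominated_convergence (𝓕 := Filter.atTop) (f := fun n => TT r n)
    (g := fun μ => pw μ ^ r) (summable_main r hr (2 ^ r) (by positivity)) (TT_tendsto r)
    (Filter.Eventually.of_forall (fun n μ => by
      rw [Real.norm_of_nonneg (TT_nonneg r n μ)]; exact TT_le r n μ))
  refine h.congr' ?_
  filter_upwards [Filter.eventually_ne_atTop 0] with n hn
  exact (hasSum_TT r n (by omega) hn).tsum_eq
end
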